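/- Every biderivation (without any skew-symmetry assumption) of a finite-dimensional simple Lie algebra L over ℂ is inner: for every biderivation f of L there exists λ ∈ ℂ such that f(x,y) = λ[x,y] for all x, y ∈ L. -/

import Mathlib

/-!
Since all derivations are inner, a biderivation has the form `f x y = ⁅φ x, y⁆ = ⁅x, ψ y⁆`.
By invariance of the Killing form, `κ(x, ⁅ψ y, z⁆) = κ(φ x, ⁅y, z⁆)` is alternating in `y, z`, which
forces `φ = ψ`: the map `φ` can be moved from one entry of a bracket to the other.

For such a `φ`, put `P(x, y) = φ ⁅x, y⁆ - ⁅φ x, y⁆`. The Jacobi identity shows that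
`2 ⁅z, P(x, y)⁆` is invariant under cyclic permutations of `x, y, z`, hence so is
`2 κ(P(x, y), ⁅z, w⁆)`. The latter also changes sign when `(x, y)` and `(z, w)` are exchanged, and
these two symmetries together kill it. Hence `P = 0`, so `φ` is an endomorphism of the adjoint
module, and Schur's lemma makes it a scalar.
-/

section Quasicentroid

variable {R L : Type*} [CommRing R] [LieRing L] [LieAlgebra R L]

/-- Membership in the quasicentroid of a Lie algebra: `φ` can be moved from one entry of a bracket
to the other. The centroid consists of those `φ` for which both sides equal `φ ⁅x, y⁆`. -/
def IsQuasicentroidal (φ : L →ₗ[R] L) : Prop :=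
  ∀ x y, ⁅φ x, y⁆ = ⁅x, φ y⁆

namespace IsQuasicentroidal

variable {φ : L →ₗ[R] L}

theorem two_nsmul_lie_map_lie_sub_lie (hφ : IsQuasicentroidal φ) (x y z : L) :
    2 • ⁅z, φ ⁅x, y⁆ - ⁅φ x, y⁆⁆ = ⁅x, φ ⁅y, z⁆⁆ + ⁅y, φ ⁅z, x⁆⁆ + ⁅z, φ ⁅x, y⁆⁆ := by
  have left_term : ⁅⁅z, φ x⁆, y⁆ = ⁅z, ⁅φ x, y⁆⁆ + ⁅x, φ ⁅y, z⁆⁆ := by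
    rw [lie_lie, hφ x ⁅z, y⁆, ← lie_skew y z, map_neg, lie_neg, sub_eq_add_neg]
  have right_term : ⁅x, ⁅z, φ y⁆⁆ = ⁅z, ⁅φ x, y⁆⁆ + ⁅y, φ ⁅z, x⁆⁆ := by
    rw [leibniz_lie, ← hφ ⁅x, z⁆ y, ← hφ x y, ← lie_skew z x, map_neg, lie_neg, lie_skew, add_comm]
  have expand : ⁅z, φ ⁅x, y⁆⁆ = ⁅⁅z, φ x⁆, y⁆ + ⁅x, ⁅z, φ y⁆⁆ := by
    rw [← hφ, leibniz_lie, hφ z x, hφ z y]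
  rw [left_term, right_term] at expand
  rw [lie_sub, nsmul_sub, two_nsmul, two_nsmul]
  nth_rw 1 [expand]
  abel

theorem two_nsmul_lie_map_lie_sub_lie_rotate (hφ : IsQuasicentroidal φ) (x y z : L) :
    2 • ⁅z, φ ⁅x, y⁆ - ⁅φ x, y⁆⁆ = 2 • ⁅x, φ ⁅y, z⁆ - ⁅φ y, z⁆⁆ := by
  rw [hφ.two_nsmul_lie_map_lie_sub_lie, hφ.two_nsmul_lie_map_lie_sub_lie, add_rotate, add_comm]

end IsQuasicentroidal

end Quasicentroid

section InvariantForm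

variable {R L : Type*} [CommRing R] [LieRing L] [LieAlgebra R L] {Φ : LinearMap.BilinForm R L}

theorem lieInvariant_apply_lie (hinv : Φ.lieInvariant L) (x y z : L) :
    Φ ⁅x, y⁆ z = Φ x ⁅y, z⁆ := by
  rw [← lie_skew, map_neg, LinearMap.neg_apply, hinv, neg_neg]

theorem eq_of_lie_eq_lie_of_lieInvariant [LieModule.IsFaithful R L L]
    (hinv : Φ.lieInvariant L) (hsep : Φ.SeparatingRight) {φ ψ : L → L}
    (h : ∀ x y, ⁅φ x, y⁆ = ⁅x, ψ y⁆) : φ = ψ := by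
  have form_eq (x y z : L) : Φ x ⁅ψ y, z⁆ = Φ (φ x) ⁅y, z⁆ := by
    rw [← lieInvariant_apply_lie hinv, ← h, lieInvariant_apply_lie hinv]
  funext y
  refine LieModule.ext_of_isFaithful (R := R) L fun z ↦ sub_eq_zero.mp (hsep _ fun x ↦ ?_)
  rw [map_sub, h, ← lie_skew, map_neg, form_eq, form_eq, ← lie_skew, map_neg, neg_neg, sub_self]

namespace IsQuasicentroidal

variable {φ : L →ₗ[R] L}

theorem apply_map_lie_sub_lie (hφ : IsQuasicentroidal φ) (hinv : Φ.lieInvariant L)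
    (x y z w : L) :
    Φ (φ ⁅x, y⁆ - ⁅φ x, y⁆) ⁅z, w⁆ = Φ (φ ⁅x, y⁆) ⁅z, w⁆ - Φ ⁅x, y⁆ (φ ⁅z, w⁆) := by
  rw [map_sub, LinearMap.sub_apply, hφ x y, lieInvariant_apply_lie hinv x (φ y), hφ y,
    ← lieInvariant_apply_lie hinv x y]

theorem apply_map_lie_sub_lie_eq_zero [NoZeroDivisors R] [NeZero (2 : R)]
    (hφ : IsQuasicentroidal φ) (hinv : Φ.lieInvariant L) (hsymm : Φ.IsSymm) (x y z w : L) :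
    Φ (φ ⁅x, y⁆ - ⁅φ x, y⁆) ⁅z, w⁆ = 0 := by
  let T (x y z w : L) : R := Φ (φ ⁅x, y⁆ - ⁅φ x, y⁆) ⁅z, w⁆
  have swap (x y z w : L) : T z w x y = -T x y z w := by
    simp only [T, hφ.apply_map_lie_sub_lie hinv]
    rw [hsymm.eq ⁅x, y⁆, hsymm.eq (φ ⁅x, y⁆), neg_sub]
  have rotate (x y z w : L) : T x y z w = T y z x w := by
    have h : 2 * Φ ⁅z, φ ⁅x, y⁆ - ⁅φ x, y⁆⁆ w = 2 * Φ ⁅x, φ ⁅y, z⁆ - ⁅φ y, z⁆⁆ w := by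
      simpa [two_mul, two_nsmul] using
        congrArg (Φ · w) (hφ.two_nsmul_lie_map_lie_sub_lie_rotate x y z)
    simpa only [T, hinv _ _ w, neg_inj] using mul_left_cancel₀ two_ne_zero h
  have self_eq_neg : T x y z w = -T x y z w := calc
    T x y z w = T y z x w := rotate x y z w
    _ = -T x w y z := swap x w y z
    _ = -T w y x z := by rw [rotate x w y z]
    _ = T x z w y := by rw [swap x z w y, neg_neg]
    _ = T z w x y := rotate x z w y
    _ = -T x y z w := swap x y z w
  have two_mul_eq_zero : 2 * T x y z w = 0 := by
    rw [two_mul, ← eq_neg_iff_add_eq_zero, ← self_eq_neg]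
  exact (mul_eq_zero_iff_left two_ne_zero).mp two_mul_eq_zero

theorem map_lie [NoZeroDivisors R] [NeZero (2 : R)] [LieModule.IsFaithful R L L]
    (hφ : IsQuasicentroidal φ) (hinv : Φ.lieInvariant L) (hsymm : Φ.IsSymm)
    (hsep : Φ.SeparatingLeft) (x y : L) :
    φ ⁅x, y⁆ = ⁅x, φ y⁆ := by
  rw [← hφ]
  refine LieModule.ext_of_isFaithful (R := R) L fun z ↦ sub_eq_zero.mp (hsep _ fun w ↦ ?_)
  rw [← sub_lie, lieInvariant_apply_lie hinv]
  exact hφ.apply_map_lie_sub_lie_eq_zero hinv hsymm x y z w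

end IsQuasicentroidal

end InvariantForm

section Biderivation

/-- A biderivation of a Lie algebra: a bilinear map that is a derivation in each argument, with no
symmetry assumption. -/
structure IsBiderivation {R L : Type*} [CommRing R] [LieRing L] [LieAlgebra R L]
    (f : L →ₗ[R] L →ₗ[R] L) : Prop where
  lie_left (x y z : L) : f ⁅x, y⁆ z = ⁅x, f y z⁆ + ⁅f x z, y⁆
  lie_right (x y z : L) : f x ⁅y, z⁆ = ⁅f x y, z⁆ + ⁅y, f x z⁆

theorem exists_linearMap_eq_lie_of_isKilling {K L M : Type*} [Field K] [LieRing L] [LieAlgebra K L]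
    [FiniteDimensional K L] [LieAlgebra.IsKilling K L] [AddCommGroup M] [Module K M]
    (g : M →ₗ[K] L →ₗ[K] L) (hg : ∀ m x y, g m ⁅x, y⁆ = ⁅g m x, y⁆ + ⁅x, g m y⁆) :
    ∃ φ : M →ₗ[K] L, ∀ m x, g m x = ⁅φ m, x⁆ := by
  obtain ⟨s, hs⟩ := (LieAlgebra.ad K L : L →ₗ[K] Module.End K L).exists_leftInverse_of_injective
    (LinearMap.ker_eq_bot.mpr LieModule.IsFaithful.injective_toEnd)
  refine ⟨s ∘ₗ g, fun m x ↦ ?_⟩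
  let D : LieDerivation K L L := ⟨g m, fun x y ↦ by rw [hg, ← lie_skew y]; abel⟩
  obtain ⟨w, hw⟩ := LieDerivation.IsKilling.exists_eq_ad D
  have g_eq : g m = LieAlgebra.ad K L w := by
    ext y
    simpa [D] using (DFunLike.congr_fun hw y).symm
  have w_eq : s (g m) = w := g_eq ▸ DFunLike.congr_fun hs w
  rw [LinearMap.comp_apply, w_eq, g_eq, LieAlgebra.ad_apply]

theorem IsBiderivation.exists_lieModuleHom {K L : Type*} [Field K] [NeZero (2 : K)] [LieRing L]
    [LieAlgebra K L] [FiniteDimensional K L] [LieAlgebra.IsKilling K L]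
    {f : L →ₗ[K] L →ₗ[K] L} (hf : IsBiderivation f) :
    ∃ γ : L →ₗ⁅K,L⁆ L, ∀ x y, f x y = γ ⁅x, y⁆ := by
  have hinv := LieModule.traceForm_lieInvariant K L L
  have hnd := LieAlgebra.IsKilling.killingForm_nondegenerate K L
  obtain ⟨φ, hφ⟩ := exists_linearMap_eq_lie_of_isKilling f hf.lie_right
  obtain ⟨ψ, hψ⟩ := exists_linearMap_eq_lie_of_isKilling f.flip
    fun z x y ↦ (hf.lie_left x y z).trans (add_comm _ _)
  have φ_eq : ⇑φ = -⇑ψ := eq_of_lie_eq_lie_of_lieInvariant (R := K) hinv hnd.2 fun x y ↦ by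
    rw [← hφ, Pi.neg_apply, lie_neg, lie_skew, ← hψ, LinearMap.flip_apply]
  have quasicentroidal : IsQuasicentroidal φ := fun x y ↦ by
    rw [← hφ, φ_eq, Pi.neg_apply, lie_neg, lie_skew, ← hψ, LinearMap.flip_apply]
  have map_lie := quasicentroidal.map_lie hinv ⟨LieModule.traceForm_comm K L L⟩ hnd.1
  exact ⟨{ φ with map_lie' := map_lie _ _ }, fun x y ↦
    (hφ x y).trans ((quasicentroidal x y).trans (map_lie x y).symm)⟩

end Biderivation

theorem lieModuleHom_exists_eq_smul_of_isIrreducible {K L M : Type*} [Field K] [IsAlgClosed K]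
    [LieRing L] [LieAlgebra K L] [AddCommGroup M] [Module K M] [LieRingModule L M] [LieModule K L M]
    [FiniteDimensional K M] [LieModule.IsIrreducible K L M] (γ : M →ₗ⁅K,L⁆ M) :
    ∃ c : K, ∀ m, γ m = c • m := by
  have := LieModule.nontrivial_of_isIrreducible K L M
  obtain ⟨c, hc⟩ := Module.End.exists_eigenvalue (γ : Module.End K M)
  obtain ⟨v, hv⟩ := hc.exists_hasEigenvector
  have v_mem : v ∈ (γ - c • LieModuleHom.id).ker := by
    simpa [sub_eq_zero] using hv.apply_eq_smul
  have ker_eq_top : (γ - c • LieModuleHom.id : M →ₗ⁅K,L⁆ M).ker = ⊤ :=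
    (eq_bot_or_eq_top _).resolve_left fun h ↦ hv.2 <| by simpa [h] using v_mem
  refine ⟨c, fun m ↦ ?_⟩
  have m_mem : m ∈ (γ - c • LieModuleHom.id : M →ₗ⁅K,L⁆ M).ker := ker_eq_top ▸ trivial
  simpa [sub_eq_zero] using m_mem

theorem biderivation_of_simple_lie_algebra_is_inner_general
    {K L : Type*} [Field K] [IsAlgClosed K] [NeZero (2 : K)] [LieRing L] [LieAlgebra K L]
    [FiniteDimensional K L] [LieAlgebra.IsKilling K L] [LieAlgebra.IsSimple K L]
    (f : L →ₗ[K] L →ₗ[K] L) (hf : IsBiderivation f) :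
    ∃ c : K, ∀ x y : L, f x y = c • ⁅x, y⁆ := by
  obtain ⟨γ, hγ⟩ := hf.exists_lieModuleHom
  obtain ⟨c, hc⟩ := lieModuleHom_exists_eq_smul_of_isIrreducible γ
  exact ⟨c, fun x y ↦ (hγ x y).trans (hc _)⟩

/-- Every biderivation (without any skew-symmetry assumption) of a
finite-dimensional simple Lie algebra `L` over `ℂ` is inner: there exists `λ ∈ ℂ` such
that `f(x,y) = λ⁅x,y⁆` for all `x, y ∈ L`. -/
theorem biderivation_of_simple_lie_algebra_is_inner
    (L : Type*) [LieRing L] [LieAlgebra ℂ L]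
    [FiniteDimensional ℂ L] [LieAlgebra.IsSimple ℂ L]
    (f : L →ₗ[ℂ] L →ₗ[ℂ] L)
    (h1 : ∀ x y z : L, f ⁅x, y⁆ z = ⁅x, f y z⁆ + ⁅f x z, y⁆)
    (h2 : ∀ x y z : L, f x ⁅y, z⁆ = ⁅f x y, z⁆ + ⁅y, f x z⁆) :
    ∃ lam : ℂ, ∀ x y : L, f x y = lam • ⁅x, y⁆ :=
  biderivation_of_simple_lie_algebra_is_inner_general f ⟨h1, h2⟩
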